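/- Let k ≥ 2 and suppose g is k times continuously differentiable (C^k). Then for every point (x,t) ∈ ℝⁿ × (0,∞) with (x,t) ∉ Σ ∪ T₁ ∪ P⁰, there exists an open neighborhood U ⊂ ℝⁿ × (0,∞) of (x,t) such that u is C^k on U. -/

import Mathlib

open scoped InnerProductSpace Topology ENNReal
open Filter

noncomputable section

/-- Euclidean space `ℝⁿ`. -/
abbrev Euc (n : ℕ) := EuclideanSpace ℝ (Fin n)

/-- Hopf–Lax solution of the Eikonal equation `uₜ + |∇u| = 0` with initial data `g`:
`u(x,t) = min {g(y) : |y - x| ≤ t}`. -/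
def HLu {n : ℕ} (g : Euc n → ℝ) (x : Euc n) (t : ℝ) : ℝ :=
  sInf (g '' Metric.closedBall x t)

/-- The set of minimizers `L(x,t) = {y : |y - x| ≤ t ∧ g y = u(x,t)}`. -/
def HLL {n : ℕ} (g : Euc n → ℝ) (x : Euc n) (t : ℝ) : Set (Euc n) :=
  {y | ‖y - x‖ ≤ t ∧ g y = HLu g x t}

/-- The characteristic from `y₀`: `X(y₀,t) = y₀ + t • Dg(y₀)/|Dg(y₀)|`. -/
def charX {n : ℕ} (Dg : Euc n → Euc n) (y₀ : Euc n) (t : ℝ) : Euc n :=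
  y₀ + t • (‖Dg y₀‖⁻¹ • Dg y₀)

/-- First termination time `t̄ₛ(y₀) = sup {t > 0 : L(X(y₀,t),t) = {y₀}}`, in `[0,∞]`
(`sup ∅ = 0`). -/
def tbar {n : ℕ} (g : Euc n → ℝ) (Dg : Euc n → Euc n) (y₀ : Euc n) : ℝ≥0∞ :=
  sSup (ENNReal.ofReal '' {t : ℝ | 0 < t ∧ HLL g (charX Dg y₀ t) t = {y₀}})

/-- Second termination time `tₛ(y₀) = inf {t > 0 : y₀ ∉ L(X(y₀,t),t)}`, in `[0,∞]`
(`inf ∅ = ∞`). -/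
def tsnd {n : ℕ} (g : Euc n → ℝ) (Dg : Euc n → Euc n) (y₀ : Euc n) : ℝ≥0∞ :=
  sInf (ENNReal.ofReal '' {t : ℝ | 0 < t ∧ y₀ ∉ HLL g (charX Dg y₀ t) t})

/-- The set `Σ` of points of `ℝⁿ × (0,∞)` at which `u` is not Fréchet differentiable. -/
def SigmaSet {n : ℕ} (g : Euc n → ℝ) : Set (Euc n × ℝ) :=
  {p | 0 < p.2 ∧ ¬ DifferentiableAt ℝ (fun q : Euc n × ℝ => HLu g q.1 q.2) p}

/-- `T(M)`: the set of termination points of characteristics from points with `Dg ≠ 0`. -/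
def TM {n : ℕ} (g : Euc n → ℝ) (Dg : Euc n → Euc n) : Set (Euc n × ℝ) :=
  {p | ∃ y₀ : Euc n, ∃ t : ℝ, Dg y₀ ≠ 0 ∧ tbar g Dg y₀ < ⊤ ∧ 0 < t ∧
    tbar g Dg y₀ ≤ ENNReal.ofReal t ∧ ENNReal.ofReal t ≤ tsnd g Dg y₀ ∧
    p = (charX Dg y₀ t, t)}

/-- `T₁`: the points of `T(M)` having a unique minimizer. -/
def T1 {n : ℕ} (g : Euc n → ℝ) (Dg : Euc n → Euc n) : Set (Euc n × ℝ) :=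
  {p ∈ TM g Dg | ∃ y : Euc n, HLL g p.1 p.2 = {y}}

/-- Termination time `tₛ(y₀,P) = inf {t > 0 : y₀ ∉ L(y₀ + tP, t)}`, in `[0,∞]`. -/
def tsP {n : ℕ} (g : Euc n → ℝ) (y₀ P : Euc n) : ℝ≥0∞ :=
  sInf (ENNReal.ofReal '' {t : ℝ | 0 < t ∧ y₀ ∉ HLL g (y₀ + t • P) t})

/-- The set `P⁰` of points on effective characteristics of unit speed emanating from
points where `Dg = 0`. -/
def P0set {n : ℕ} (g : Euc n → ℝ) (Dg : Euc n → Euc n) : Set (Euc n × ℝ) :=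
  {p | ∃ y₀ P : Euc n, ∃ t : ℝ, Dg y₀ = 0 ∧ ‖P‖ = 1 ∧ 0 < t ∧
    ENNReal.ofReal t ≤ tsP g y₀ P ∧ p = (y₀ + t • P, t)}


section HLaux

variable {n : ℕ}

theorem HLu_bdd {g : Euc n → ℝ} (hc : Continuous g) (x : Euc n) (t : ℝ) :
    BddBelow (g '' Metric.closedBall x t) :=
  ((isCompact_closedBall x t).image hc).bddBelow

theorem HLu_le {g : Euc n → ℝ} (hc : Continuous g) {x y : Euc n} {t : ℝ} (h : ‖y - x‖ ≤ t) :
    HLu g x t ≤ g y :=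
  csInf_le (HLu_bdd hc x t) ⟨y, by simpa [dist_eq_norm] using h, rfl⟩

theorem HLL_nonempty {g : Euc n → ℝ} (hc : Continuous g) (x : Euc n) {t : ℝ} (h : 0 ≤ t) :
    (HLL g x t).Nonempty := by
  have hne : (Metric.closedBall x t).Nonempty := Metric.nonempty_closedBall.2 h
  obtain ⟨y, hy, hy'⟩ := ((isCompact_closedBall x t).image hc).sInf_mem (hne.image g)
  exact ⟨y, by simpa [dist_eq_norm] using hy, hy'⟩

theorem HLL_of {g : Euc n → ℝ} (hc : Continuous g) {x y : Euc n} {t : ℝ} (h : ‖y - x‖ ≤ t)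
    (hm : ∀ z, ‖z - x‖ ≤ t → g y ≤ g z) : y ∈ HLL g x t := by
  refine ⟨h, le_antisymm ?_ (HLu_le hc h)⟩
  obtain ⟨z, hz, hz'⟩ := HLL_nonempty hc x (le_trans (norm_nonneg _) h)
  rw [← hz']; exact hm z hz

theorem HLL_min {g : Euc n → ℝ} (hc : Continuous g) {x y z : Euc n} {t : ℝ} (h : y ∈ HLL g x t)
    (hz : ‖z - x‖ ≤ t) : g y ≤ g z := by
  rw [h.2]; exact HLu_le hc hz

/-- Minimality persists on earlier parts of the segment. -/
theorem HLL_seg {g : Euc n → ℝ} (hc : Continuous g) {y N : Euc n} {s t : ℝ} (hN : ‖N‖ = 1)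
    (hs : 0 ≤ s) (hst : s ≤ t) (h : y ∈ HLL g (y + t • N) t) : y ∈ HLL g (y + s • N) s := by
  refine HLL_of hc ?_ ?_
  · simp [norm_smul, hN, abs_of_nonneg hs]
  · intro z hz
    refine HLL_min hc h ?_
    have : z - (y + t • N) = (z - (y + s • N)) - (t - s) • N := by module
    rw [this]
    refine (norm_sub_le _ _).trans ?_
    rw [norm_smul, hN, Real.norm_of_nonneg (by linarith)]
    linarith

theorem le_sInf_times {g : Euc n → ℝ} (hc : Continuous g) {y N : Euc n} {t : ℝ} (hN : ‖N‖ = 1)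
    (h : y ∈ HLL g (y + t • N) t) :
    ENNReal.ofReal t ≤ sInf (ENNReal.ofReal '' {t : ℝ | 0 < t ∧ y ∉ HLL g (y + t • N) t}) := by
  refine le_sInf ?_
  rintro _ ⟨s, ⟨hs, hs'⟩, rfl⟩
  refine ENNReal.ofReal_le_ofReal ?_
  by_contra hlt
  exact hs' (HLL_seg hc hN hs.le (not_le.1 hlt).le h)

theorem interior_Dg {g : Euc n → ℝ} {Dg : Euc n → Euc n} (hc : Continuous g)
    (hg : ∀ y, HasGradientAt g (Dg y) y) {x y : Euc n} {t : ℝ}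
    (h : y ∈ HLL g x t) (hlt : ‖y - x‖ < t) : Dg y = 0 := by
  have hm : IsLocalMin g y := by
    have : ∀ᶠ z in 𝓝 y, ‖z - x‖ < t :=
      (Continuous.tendsto (by fun_prop : Continuous fun z : Euc n => ‖z - x‖) y).eventually
        (gt_mem_nhds hlt)
    filter_upwards [this] with z hz
    exact HLL_min hc h hz.le
  have := hm.hasFDerivAt_eq_zero (hg y).hasFDerivAt
  simpa using this

theorem lagrange {g : Euc n → ℝ} {Dg : Euc n → Euc n} (hc : Continuous g)
    (hg : ∀ y, HasGradientAt g (Dg y) y) {x y : Euc n} {t : ℝ} (ht : 0 < t)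
    (h : y ∈ HLL g x t) (hD : Dg y ≠ 0) : x = charX Dg y t := by
  have hb : ‖y - x‖ = t := le_antisymm h.1 (not_lt.1 fun hlt => hD (interior_Dg hc hg h hlt))
  set N : Euc n := t⁻¹ • (x - y) with hNdef
  have hxy : x = y + t • N := by rw [hNdef, smul_smul, mul_inv_cancel₀ ht.ne']; module
  have hN : ‖N‖ = 1 := by
    rw [hNdef, norm_smul, norm_sub_rev, hb, norm_inv, Real.norm_of_nonneg ht.le,
      inv_mul_cancel₀ ht.ne']
  have key : ∀ v : Euc n, 0 < ⟪v, N⟫_ℝ → 0 ≤ ⟪Dg y, v⟫_ℝ := by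
    intro v hv
    by_contra hneg
    have hd : HasDerivAt (fun e : ℝ => g (y + e • v)) ⟪Dg y, v⟫_ℝ 0 := by
      have h1 : HasDerivAt (fun e : ℝ => y + e • v) v 0 := by
        simpa using ((hasDerivAt_id (0:ℝ)).smul_const v).const_add y
      have h2 : HasFDerivAt g (InnerProductSpace.toDual ℝ (Euc n) (Dg y)) (y + (0:ℝ) • v) := by
        simpa using (hg y).hasFDerivAt
      exact h2.comp_hasDerivAt (0:ℝ) h1
    have hsl := hd.tendsto_slope_zero_right
    have hev : ∀ᶠ e in 𝓝[>] (0:ℝ), e⁻¹ • (g (y + (0 + e) • v) - g (y + (0:ℝ) • v)) < 0 :=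
      hsl.eventually (gt_mem_nhds (not_le.1 hneg))
    have hev2 : ∀ᶠ e in 𝓝[>] (0:ℝ), e * ‖v‖^2 < 2 * t * ⟪v, N⟫_ℝ := by
      apply mem_nhdsWithin_of_mem_nhds
      refine (Continuous.tendsto (by fun_prop : Continuous fun e : ℝ => e * ‖v‖^2) 0).eventually
        (gt_mem_nhds ?_)
      simp; positivity
    obtain ⟨e, he1, he2, he0⟩ := (hev.and (hev2.and self_mem_nhdsWithin)).exists
    have he0 : 0 < e := he0
    have : g y ≤ g (y + e • v) := by
      refine HLL_min hc h ?_
      have e1 : y + e • v - x = e • v - t • N := by rw [hxy]; module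
      rw [e1]
      refine abs_le_of_sq_le_sq' ?_ ht.le |>.2
      rw [norm_sub_sq_real, norm_smul, norm_smul, hN, inner_smul_left, inner_smul_right]
      simp only [Real.norm_eq_abs, mul_pow, sq_abs, conj_trivial]
      nlinarith
    simp only [zero_add, zero_smul, add_zero, smul_eq_mul] at he1
    have := mul_nonneg (inv_nonneg.2 he0.le) (sub_nonneg.2 this)
    linarith
  have hpos : 0 < ‖Dg y‖ := norm_pos_iff.2 hD
  have heq : ⟪Dg y, N⟫_ℝ = ‖Dg y‖ * ‖N‖ := by
    refine le_antisymm (real_inner_le_norm _ _) ?_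
    by_contra hlt
    have := key (‖Dg y‖ • N - Dg y) (by
      rw [inner_sub_left, inner_smul_left, real_inner_self_eq_norm_sq, hN]; rw [hN] at hlt
      simp; linarith)
    rw [inner_sub_right, inner_smul_right, real_inner_self_eq_norm_sq] at this
    rw [hN] at hlt
    nlinarith
  have h2 := inner_eq_norm_mul_iff_real.1 heq
  rw [hN, one_smul] at h2
  have h6 : ‖Dg y‖⁻¹ • Dg y = N := by
    have := congrArg (fun w => ‖Dg y‖⁻¹ • w) h2
    simpa only [smul_smul, inv_mul_cancel₀ hpos.ne', one_smul] using this
  rw [charX, h6]; exact hxy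

theorem u_fderiv {g : Euc n → ℝ} {Dg : Euc n → Euc n} (hc : Continuous g)
    (hg : ∀ y, HasGradientAt g (Dg y) y) {y N : Euc n} {t : ℝ} (ht : 0 < t) (hN : ‖N‖ = 1)
    (h : y ∈ HLL g (y + t • N) t) {A : Euc n × ℝ →L[ℝ] ℝ}
    (hA : HasFDerivAt (fun q : Euc n × ℝ => HLu g q.1 q.2) A (y + t • N, t)) (v : Euc n) (σ : ℝ) :
    A (v, σ) = ⟪Dg y, v⟫_ℝ - σ * ⟪Dg y, N⟫_ℝ := by
  let B : Euc n × ℝ →L[ℝ] Euc n :=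
    ContinuousLinearMap.fst ℝ (Euc n) ℝ - (ContinuousLinearMap.snd ℝ (Euc n) ℝ).smulRight N
  have hB : HasFDerivAt (fun q : Euc n × ℝ => B q) B (y + t • N, t) := B.hasFDerivAt
  have hBy : B (y + t • N, t) = y := by simp [B]
  have h2 : HasFDerivAt g (InnerProductSpace.toDual ℝ (Euc n) (Dg y)) (B (y + t • N, t)) := by
    rw [hBy]; exact (hg y).hasFDerivAt
  have h3 := (h2.comp (y + t • N, t) hB).sub hA
  have hm : IsLocalMin ((g ∘ fun q : Euc n × ℝ => B q) - fun q : Euc n × ℝ => HLu g q.1 q.2)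
      (y + t • N, t) := by
    have : ∀ᶠ q : Euc n × ℝ in 𝓝 (y + t • N, t), 0 < q.2 :=
      (continuous_snd.tendsto (y + t • N, t)).eventually (lt_mem_nhds ht)
    filter_upwards [this] with q hq
    have e : (0:ℝ) ≤ g (B q) - HLu g q.1 q.2 := by
      refine sub_nonneg.2 (HLu_le hc ?_)
      simp [B, norm_smul, hN, abs_of_pos hq]
    simp only [Pi.sub_apply, Function.comp, hBy, h.2, sub_self]
    exact e
  have h4 := hm.hasFDerivAt_eq_zero h3
  have h5 := congrArg (fun L : Euc n × ℝ →L[ℝ] ℝ => L (v, σ)) h4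
  simp [B] at h5
  linarith

theorem HLL_usc {g : Euc n → ℝ} (hc : Continuous g) {p : Euc n × ℝ}
    (hu : ContinuousAt (fun q : Euc n × ℝ => HLu g q.1 q.2) p) {V : Set (Euc n)} (hV : IsOpen V)
    (h : HLL g p.1 p.2 ⊆ V) : ∀ᶠ q : Euc n × ℝ in 𝓝 p, HLL g q.1 q.2 ⊆ V := by
  have hK : IsCompact (Metric.closedBall p.1 (p.2 + 1) \ V) :=
    (isCompact_closedBall _ _).diff hV
  have h1 : ∀ᶠ q : Euc n × ℝ in 𝓝 p, ∀ y ∈ Metric.closedBall p.1 (p.2 + 1) \ V,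
      y ∉ HLL g q.1 q.2 := by
    refine hK.eventually_forall_of_forall_eventually ?_
    intro y hy
    have hyL : y ∉ HLL g p.1 p.2 := fun hh => hy.2 (h hh)
    by_cases hb : ‖y - p.1‖ ≤ p.2
    · have hne : g y ≠ HLu g p.1 p.2 := fun e => hyL ⟨hb, e⟩
      have c1 : ContinuousAt (fun z : (Euc n × ℝ) × Euc n => g z.2) (p, y) := by fun_prop
      have c2 : ContinuousAt (fun z : (Euc n × ℝ) × Euc n => HLu g z.1.1 z.1.2) (p, y) :=
        ContinuousAt.comp (f := Prod.fst) (x := (p, y)) hu continuousAt_fst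
      filter_upwards [(c1.sub c2).eventually_ne (sub_ne_zero.2 hne)] with z hz hz'
      exact hz (sub_eq_zero.2 hz'.2)
    · have : ∀ᶠ z : (Euc n × ℝ) × Euc n in 𝓝 (p, y), z.1.2 < ‖z.2 - z.1.1‖ := by
        refine (isOpen_lt ?_ ?_).mem_nhds (not_le.1 hb) <;> fun_prop
      filter_upwards [this] with z hz hz'
      exact absurd hz'.1 (not_le.2 hz)
  have h2 : ∀ᶠ q : Euc n × ℝ in 𝓝 p, ‖q.1 - p.1‖ + q.2 < p.2 + 1 := by
    refine (isOpen_lt ?_ ?_).mem_nhds ?_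
    · fun_prop
    · fun_prop
    · simp
  filter_upwards [h1, h2] with q hq1 hq2 y hy
  by_contra hyV
  refine hq1 y ⟨?_, hyV⟩ hy
  rw [Metric.mem_closedBall, dist_eq_norm]
  have e : y - p.1 = (y - q.1) + (q.1 - p.1) := by abel
  rw [e]
  have := norm_add_le (y - q.1) (q.1 - p.1)
  have := hy.1
  linarith

theorem Dg_contDiff {g : Euc n → ℝ} {Dg : Euc n → Euc n} {m : ℕ}
    (hgk : ContDiff ℝ ((m + 1 : ℕ) : WithTop ℕ∞) g)
    (hg : ∀ y, HasGradientAt g (Dg y) y) : ContDiff ℝ m Dg := by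
  have h1 : ContDiff ℝ m (fderiv ℝ g) := hgk.fderiv_right (by norm_cast)
  have h2 : Dg = fun y => (InnerProductSpace.toDual ℝ (Euc n)).symm (fderiv ℝ g y) := by
    funext y
    rw [(hg y).hasFDerivAt.fderiv]; simp
  rw [h2]
  exact (InnerProductSpace.toDual ℝ (Euc n)).symm.contDiff.comp h1

theorem N_norm {Dg : Euc n → Euc n} {y : Euc n} (h : Dg y ≠ 0) : ‖‖Dg y‖⁻¹ • Dg y‖ = 1 := by
  rw [norm_smul, norm_inv, norm_norm, inv_mul_cancel₀ (norm_ne_zero_iff.2 h)]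

/-- Second order condition from the larger tangent ball: non-focality before termination. -/
theorem nonfocal {g : Euc n → ℝ} {Dg : Euc n → Euc n} (hc : Continuous g)
    (hg : ∀ y, HasGradientAt g (Dg y) y) {y v : Euc n} {s t : ℝ} (ht : 0 < t) (hts : t < s)
    (hD : Dg y ≠ 0) (hdD : DifferentiableAt ℝ Dg y)
    (h : y ∈ HLL g (charX Dg y s) s)
    {N' : Euc n →L[ℝ] Euc n} (hN' : HasFDerivAt (fun z => ‖Dg z‖⁻¹ • Dg z) N' y)
    (hv : v + t • N' v = 0) : v = 0 := by
  by_contra hv0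
  have hpos : 0 < ‖Dg y‖ := norm_pos_iff.2 hD
  have hvpos : 0 < ‖v‖ := norm_pos_iff.2 hv0
  set N : Euc n := ‖Dg y‖⁻¹ • Dg y with hNdef
  have hN : ‖N‖ = 1 := N_norm hD
  have hDN : Dg y = ‖Dg y‖ • N := by
    rw [hNdef, smul_smul, mul_inv_cancel₀ hpos.ne', one_smul]
  have hs : 0 < s := ht.trans hts
  have hNv : N' v = -(t⁻¹ • v) := by
    have : t • N' v = -v := by rw [eq_neg_iff_add_eq_zero, add_comm]; exact hv
    rw [← smul_neg, ← this, smul_smul, inv_mul_cancel₀ ht.ne', one_smul]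
  -- `v` is orthogonal to `N`
  have hort : ⟪v, N⟫_ℝ = 0 := by
    have h1 := hN'.norm_sq
    have h2 : (fun z => ‖‖Dg z‖⁻¹ • Dg z‖ ^ 2) =ᶠ[𝓝 y] fun _ => (1:ℝ) := by
      filter_upwards [hdD.continuousAt.eventually_ne hD] with z hz
      rw [N_norm hz, one_pow]
    have h3 := (h1.congr_of_eventuallyEq h2.symm).unique (hasFDerivAt_const (1:ℝ) y)
    have h4 := congrArg (fun L : Euc n →L[ℝ] ℝ => L v) h3
    simp only [← hNdef] at h4
    simp [hNv, inner_smul_right, ht.ne'] at h4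
    rw [real_inner_comm]; exact h4
  -- the Hessian in direction `v`
  set H := fderiv ℝ Dg y with hH
  have hHv : ⟪H v, v⟫_ℝ = -(‖Dg y‖ * t⁻¹ * ‖v‖ ^ 2) := by
    have hρ : DifferentiableAt ℝ (fun z => ‖Dg z‖) y := hdD.norm ℝ hD
    have h1 := hρ.hasFDerivAt.smul hN'
    have h2 : (fun z => ‖Dg z‖ • (‖Dg z‖⁻¹ • Dg z)) =ᶠ[𝓝 y] Dg := by
      filter_upwards [hdD.continuousAt.eventually_ne hD] with z hz
      rw [smul_smul, mul_inv_cancel₀ (norm_ne_zero_iff.2 hz), one_smul]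
    have h3 := (h1.congr_of_eventuallyEq h2.symm).unique hdD.hasFDerivAt
    rw [hH, ← h3]
    have h5 : ⟪N, v⟫_ℝ = 0 := by rw [real_inner_comm]; exact hort
    simp only [← hNdef, ContinuousLinearMap.add_apply, ContinuousLinearMap.smul_apply,
      ContinuousLinearMap.smulRight_apply, hNv, inner_add_left, inner_smul_left, inner_neg_left,
      h5, real_inner_self_eq_norm_sq, conj_trivial]
    ring
  -- the test curve
  obtain ⟨c, hc1, hc2⟩ : ∃ c, ‖v‖ ^ 2 / (2 * s) < c ∧ c < ‖v‖ ^ 2 / (2 * t) :=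
    exists_between (by gcongr)
  have hc0 : 0 < c := lt_of_le_of_lt (by positivity) hc1
  have hγ : ∀ e : ℝ, HasDerivAt (fun e : ℝ => y + (e • v + (c * e ^ 2) • N))
      (v + (2 * c * e) • N) e := by
    intro e
    have h1 : HasDerivAt (fun e : ℝ => c * e ^ 2) (2 * c * e) e := by
      convert! ((hasDerivAt_id e).pow 2).const_mul c using 1
      simp; ring
    have h2 := (((hasDerivAt_id e).smul_const v).add (h1.smul_const N)).const_add y
    simpa using! h2
  set φ : ℝ → ℝ := fun e => g (y + (e • v + (c * e ^ 2) • N)) with hφ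
  have hφ' : ∀ e : ℝ, HasDerivAt φ
      ⟪Dg (y + (e • v + (c * e ^ 2) • N)), v + (2 * c * e) • N⟫_ℝ e := fun e =>
    (hg _).hasFDerivAt.comp_hasDerivAt e (hγ e)
  have hd1 : deriv φ = fun e => ⟪Dg (y + (e • v + (c * e ^ 2) • N)), v + (2 * c * e) • N⟫_ℝ :=
    funext fun e => (hφ' e).deriv
  have hd10 : deriv φ 0 = 0 := by
    rw [hd1]
    have : ⟪Dg y, v⟫_ℝ = 0 := by
      rw [hDN, inner_smul_left, real_inner_comm, hort]; simp
    simpa using this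
  have hd2 : HasDerivAt (deriv φ) (⟪H v, v⟫_ℝ + 2 * c * ‖Dg y‖) 0 := by
    rw [hd1]
    have hH0 : HasFDerivAt Dg H (y + ((0:ℝ) • v + (c * (0:ℝ) ^ 2) • N)) := by
      simpa using hdD.hasFDerivAt
    have a1 := hH0.comp_hasDerivAt (0:ℝ) (hγ 0)
    have a2 : HasDerivAt (fun e : ℝ => v + (2 * c * e) • N) ((2 * c) • N) 0 := by
      have := (((hasDerivAt_id (0:ℝ)).const_mul (2 * c)).smul_const N).const_add v
      simpa using! this
    have a3 := a1.inner ℝ a2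
    have e1 : ⟪Dg y, N⟫_ℝ = ‖Dg y‖ := by
      conv_lhs => rw [hDN]
      rw [inner_smul_left, real_inner_self_eq_norm_sq, hN]; simp
    convert! a3 using 1
    simp [inner_smul_right, e1]
    ring
  have hneg : deriv (deriv φ) 0 < 0 := by
    rw [hd2.deriv, hHv]
    have : 2 * t * c < ‖v‖ ^ 2 := by
      rw [lt_div_iff₀ (by positivity)] at hc2; linarith
    have h7 : 2 * c < t⁻¹ * ‖v‖ ^ 2 := by
      rw [inv_mul_eq_div, lt_div_iff₀ ht]; linarith
    nlinarith
  have hmax := isLocalMax_of_deriv_deriv_neg hneg hd10 (hφ' 0).continuousAt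
  have hmin : IsLocalMin φ 0 := by
    have h8 : ∀ᶠ e : ℝ in 𝓝 0, ‖v‖ ^ 2 + c ^ 2 * e ^ 2 < 2 * s * c := by
      refine (isOpen_lt ?_ ?_).mem_nhds ?_
      · fun_prop
      · fun_prop
      · rw [div_lt_iff₀ (by positivity)] at hc1
        simp; linarith
    filter_upwards [h8] with e he
    have : g y ≤ φ e := by
      refine HLL_min hc h ?_
      have e1 : y + (e • v + (c * e ^ 2) • N) - charX Dg y s = e • v + (c * e ^ 2 - s) • N := by
        rw [charX, ← hNdef]; module
      rw [e1]
      refine abs_le_of_sq_le_sq' ?_ hs.le |>.2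
      rw [norm_add_sq_real, norm_smul, norm_smul, hN, inner_smul_left, inner_smul_right, hort]
      simp only [Real.norm_eq_abs, mul_pow, sq_abs, mul_zero, one_pow, mul_one]
      nlinarith [sq_nonneg e]
    simpa [hφ] using! this
  have hconst : φ =ᶠ[𝓝 0] fun _ => φ 0 := by
    filter_upwards [hmax, hmin] with e h1 h2
    exact le_antisymm h1 h2
  have h9 : deriv φ =ᶠ[𝓝 0] fun _ => (0:ℝ) := by
    simpa using! hconst.deriv
  have h10 : deriv (deriv φ) 0 = 0 := by
    rw [h9.deriv_eq]; simp
  linarith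

/-- The regular case. -/
theorem regular_case {g : Euc n → ℝ} {Dg : Euc n → Euc n} {m : ℕ} (hm : 1 ≤ m)
    (hgk : ContDiff ℝ ((m + 1 : ℕ) : WithTop ℕ∞) g)
    (hg : ∀ y, HasGradientAt g (Dg y) y) {y : Euc n} {s t : ℝ} (ht : 0 < t) (hts : t < s)
    (hD : Dg y ≠ 0) (hL : HLL g (charX Dg y t) t ⊆ {y})
    (h : y ∈ HLL g (charX Dg y s) s)
    (hu : ContinuousAt (fun q : Euc n × ℝ => HLu g q.1 q.2) (charX Dg y t, t)) :
    ContDiffAt ℝ ((m + 1 : ℕ) : WithTop ℕ∞) (fun q : Euc n × ℝ => HLu g q.1 q.2)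
      (charX Dg y t, t) := by
  have hc : Continuous g := hgk.continuous
  have hDc : ContDiff ℝ m Dg := Dg_contDiff hgk hg
  have hm0 : (m : WithTop ℕ∞) ≠ 0 := by exact_mod_cast (by omega : m ≠ 0)
  have hnorm : ContDiffAt ℝ m (fun z => ‖Dg z‖) y := hDc.contDiffAt.norm ℝ hD
  have hNc : ContDiffAt ℝ m (fun z => ‖Dg z‖⁻¹ • Dg z) y :=
    (hnorm.inv (norm_ne_zero_iff.2 hD)).smul hDc.contDiffAt
  set Φ : Euc n × ℝ → Euc n × ℝ := fun w => (charX Dg w.1 w.2, w.2) with hΦ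
  have hNc' : ContDiffAt ℝ m (fun w : Euc n × ℝ => ‖Dg w.1‖⁻¹ • Dg w.1) (y, t) :=
    ContDiffAt.comp (y, t) (f := Prod.fst) hNc contDiffAt_fst
  have hΦc : ContDiffAt ℝ m Φ (y, t) := by
    refine ContDiffAt.prodMk ?_ contDiffAt_snd
    exact contDiffAt_fst.add (contDiffAt_snd.smul hNc')
  set N' := fderiv ℝ (fun z => ‖Dg z‖⁻¹ • Dg z) y with hN'
  have hNd : HasFDerivAt (fun z => ‖Dg z‖⁻¹ • Dg z) N' y :=
    (hNc.differentiableAt hm0).hasFDerivAt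
  set F := fderiv ℝ Φ (y, t) with hF
  have hΦd : HasFDerivAt Φ F (y, t) := (hΦc.differentiableAt hm0).hasFDerivAt
  have hFapp : ∀ v σ, F (v, σ) = (v + (t • N' v + σ • (‖Dg y‖⁻¹ • Dg y)), σ) := by
    intro v σ
    have a0 : HasFDerivAt (fun w : Euc n × ℝ => ‖Dg w.1‖⁻¹ • Dg w.1)
        (N'.comp (ContinuousLinearMap.fst ℝ (Euc n) ℝ)) (y, t) :=
      HasFDerivAt.comp (y, t) (f := Prod.fst) hNd hasFDerivAt_fst
    have a1 := ((hasFDerivAt_fst (𝕜 := ℝ) (p := (y, t))).add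
      ((hasFDerivAt_snd (𝕜 := ℝ) (p := (y, t))).smul a0)).prodMk
      (hasFDerivAt_snd (𝕜 := ℝ) (p := (y, t)))
    have a2 := hΦd.unique a1
    rw [a2]
    simp
  have hinj : Function.Injective F := by
    rw [injective_iff_map_eq_zero]
    rintro ⟨v, σ⟩ hvσ
    rw [hFapp] at hvσ
    have hσ : σ = 0 := congrArg Prod.snd hvσ
    have hv : v + (t • N' v + σ • (‖Dg y‖⁻¹ • Dg y)) = 0 := congrArg Prod.fst hvσ
    rw [hσ, zero_smul, add_zero] at hv
    have := nonfocal hc hg ht hts hD (hDc.differentiable hm0 y) h hNd hv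
    rw [this, hσ]; rfl
  let e : (Euc n × ℝ) ≃L[ℝ] (Euc n × ℝ) :=
    (LinearEquiv.ofInjectiveEndo F.toLinearMap hinj).toContinuousLinearEquiv
  have he : (e : Euc n × ℝ →L[ℝ] Euc n × ℝ) = F := by
    ext w <;> rfl
  rw [← he] at hΦd
  have hst := hΦc.hasStrictFDerivAt' hΦd hm0
  set ψ := hΦc.localInverse hΦd hm0 with hψ
  have hψc : ContDiffAt ℝ m ψ (charX Dg y t, t) := hΦc.to_localInverse hΦd hm0
  have hψ0 : ψ (charX Dg y t, t) = (y, t) := hΦc.localInverse_apply_image hΦd hm0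
  have hleft : ∀ᶠ w in 𝓝 (y, t), ψ (Φ w) = w := hst.eventually_left_inverse
  rw [nhds_prod_eq, eventually_prod_iff] at hleft
  obtain ⟨pa, hpa, pb, hpb, hab⟩ := hleft
  have hVn : ∀ᶠ z in 𝓝 y, pa z ∧ Dg z ≠ 0 :=
    hpa.and (hDc.continuous.continuousAt.eventually_ne hD)
  obtain ⟨V, hV, hVo, hyV⟩ := eventually_nhds_iff.1 hVn
  have hLV : HLL g (charX Dg y t) t ⊆ V := fun z hz => by
    rw [Set.mem_singleton_iff.1 (hL hz)]; exact hyV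
  have hev1 := HLL_usc (p := (charX Dg y t, t)) hc hu hVo hLV
  have hev2 : ∀ᶠ q : Euc n × ℝ in 𝓝 (charX Dg y t, t), pb q.2 :=
    (continuous_snd.tendsto (charX Dg y t, t)).eventually hpb
  have hev3 : ∀ᶠ q : Euc n × ℝ in 𝓝 (charX Dg y t, t), 0 < q.2 :=
    (continuous_snd.tendsto (charX Dg y t, t)).eventually (lt_mem_nhds ht)
  have hmain : ∀ᶠ q : Euc n × ℝ in 𝓝 (charX Dg y t, t),
      0 < q.2 ∧ (ψ q).1 ∈ HLL g q.1 q.2 ∧ Dg (ψ q).1 ≠ 0 := by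
    filter_upwards [hev1, hev2, hev3] with q h1 h2 h3
    obtain ⟨z, hz⟩ := HLL_nonempty hc q.1 h3.le
    have hzV := hV z (h1 hz)
    have hq : q = Φ (z, q.2) := by
      rw [hΦ]; exact Prod.ext (lagrange hc hg h3 hz hzV.2) rfl
    have : ψ q = (z, q.2) := by rw [hq]; exact hab hzV.1 h2
    rw [this]
    exact ⟨h3, hz, hzV.2⟩
  have hueq : (fun q : Euc n × ℝ => HLu g q.1 q.2) =ᶠ[𝓝 (charX Dg y t, t)]
      fun q => g (ψ q).1 := by
    filter_upwards [hmain] with q hq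
    exact hq.2.1.2.symm
  have hum : ContDiffAt ℝ m (fun q : Euc n × ℝ => HLu g q.1 q.2) (charX Dg y t, t) := by
    refine ContDiffAt.congr_of_eventuallyEq ?_ hueq
    exact (hgk.of_le (by exact_mod_cast (by omega : m ≤ m + 1))).contDiffAt.comp _ hψc.fst
  have hudiff : ∀ᶠ q in 𝓝 (charX Dg y t, t),
      DifferentiableAt ℝ (fun q : Euc n × ℝ => HLu g q.1 q.2) q :=
    (hum.eventually (by simp)).mono fun q hq => hq.differentiableAt hm0
  let A : Euc n × ℝ → (Euc n × ℝ →L[ℝ] ℝ) := fun q =>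
    (InnerProductSpace.toDual ℝ (Euc n) (Dg (ψ q).1)).comp (ContinuousLinearMap.fst ℝ (Euc n) ℝ)
      - ‖Dg (ψ q).1‖ • ContinuousLinearMap.snd ℝ (Euc n) ℝ
  have hDψ : ContDiffAt ℝ m (fun q => Dg (ψ q).1) (charX Dg y t, t) :=
    hDc.contDiffAt.comp _ hψc.fst
  push_cast
  rw [contDiffAt_succ_iff_hasFDerivAt]
  refine ⟨A, ⟨{q | HasFDerivAt (fun q : Euc n × ℝ => HLu g q.1 q.2) (A q) q}, ?_, fun _ hq => hq⟩,
    ?_⟩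
  · filter_upwards [hmain, hudiff] with q hq hqd
    obtain ⟨hq0, hqL, hqD⟩ := hq
    set z := (ψ q).1 with hz
    have hx : q.1 = z + q.2 • (‖Dg z‖⁻¹ • Dg z) := lagrange hc hg hq0 hqL hqD
    have hqq : q = (z + q.2 • (‖Dg z‖⁻¹ • Dg z), q.2) := Prod.ext hx rfl
    have hfd := hqd.hasFDerivAt
    have hAe : fderiv ℝ (fun q : Euc n × ℝ => HLu g q.1 q.2) q = A q := by
      refine ContinuousLinearMap.ext ?_
      rintro ⟨v, σ⟩
      have hL' := hqL
      rw [hx] at hL'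
      have hfd' : HasFDerivAt (fun q : Euc n × ℝ => HLu g q.1 q.2)
          (fderiv ℝ (fun q : Euc n × ℝ => HLu g q.1 q.2) q)
          (z + q.2 • (‖Dg z‖⁻¹ • Dg z), q.2) := by
        rw [← hqq]; exact hfd
      rw [u_fderiv hc hg hq0 (N_norm hqD) hL' hfd' v σ]
      have hp : ‖Dg z‖ ≠ 0 := norm_ne_zero_iff.2 hqD
      simp only [A, ← hz, inner_smul_right, real_inner_self_eq_norm_sq]
      simp
      field_simp
    rw [← hAe]
    exact hfd
  · refine ContDiffAt.sub ?_ ?_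
    · refine ContDiffAt.clm_comp ?_ contDiffAt_const
      exact (InnerProductSpace.toDual ℝ (Euc n)).contDiff.contDiffAt.comp _ hDψ
    · have hnn : ContDiffAt ℝ m (fun q => ‖Dg (ψ q).1‖) (charX Dg y t, t) := by
        refine hDψ.norm ℝ ?_
        rw [hψ0]; exact hD
      exact hnn.smul contDiffAt_const

end HLaux

theorem Ck_regularity_off_singular_set {n k : ℕ} (hn : 0 < n) (hk : 2 ≤ k)
    (g : Euc n → ℝ) (Dg : Euc n → Euc n)
    (hgk : ContDiff ℝ k g) (hg : ∀ y, HasGradientAt g (Dg y) y) :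
    ∀ p : Euc n × ℝ, 0 < p.2 → p ∉ SigmaSet g ∪ T1 g Dg ∪ P0set g Dg →
      ∃ U : Set (Euc n × ℝ), IsOpen U ∧ p ∈ U ∧ U ⊆ {q : Euc n × ℝ | 0 < q.2} ∧
        ContDiffOn ℝ k (fun q : Euc n × ℝ => HLu g q.1 q.2) U := by
  intro p hp hpn
  obtain ⟨x, t⟩ := p
  have ht : 0 < t := hp
  simp only [Set.mem_union, not_or] at hpn
  obtain ⟨⟨hS, hT⟩, hP⟩ := hpn
  have hc : Continuous g := hgk.continuous
  have hd : DifferentiableAt ℝ (fun q : Euc n × ℝ => HLu g q.1 q.2) (x, t) := by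
    by_contra hnd
    exact hS ⟨hp, hnd⟩
  suffices hCk : ContDiffAt ℝ k (fun q : Euc n × ℝ => HLu g q.1 q.2) (x, t) by
    have hev := hCk.eventually (by simp)
    have hev3 : ∀ᶠ q : Euc n × ℝ in 𝓝 (x, t), 0 < q.2 :=
      (continuous_snd.tendsto (x, t)).eventually (lt_mem_nhds ht)
    obtain ⟨U, hU, hUo, hpU⟩ := eventually_nhds_iff.1 (hev.and hev3)
    exact ⟨U, hUo, hpU, fun q hq => (hU q hq).2, fun q hq => (hU q hq).1.contDiffWithinAt⟩
  have hrep : ∀ z ∈ HLL g x t, ¬ ‖z - x‖ < t → ∃ N : Euc n, ‖N‖ = 1 ∧ x = z + t • N := by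
    intro z hz hlt
    have hb : ‖z - x‖ = t := le_antisymm hz.1 (not_lt.1 hlt)
    refine ⟨t⁻¹ • (x - z), ?_, ?_⟩
    · rw [norm_smul, norm_sub_rev, hb, norm_inv, Real.norm_of_nonneg ht.le,
        inv_mul_cancel₀ ht.ne']
    · rw [smul_smul, mul_inv_cancel₀ ht.ne']; module
  have hcrit : ∀ z ∈ HLL g x t, Dg z = 0 → ‖z - x‖ < t := by
    intro z hz hDz
    by_contra hlt
    obtain ⟨N, hN, hx⟩ := hrep z hz hlt
    refine hP ⟨z, N, t, hDz, hN, ht, ?_, by rw [hx]⟩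
    rw [hx] at hz
    exact le_sInf_times hc hN hz
  by_cases hex : ∃ z ∈ HLL g x t, Dg z = 0
  · obtain ⟨z, hz, hDz⟩ := hex
    have hzlt := hcrit z hz hDz
    have hnear : ∀ᶠ q : Euc n × ℝ in 𝓝 (x, t), ‖z - q.1‖ < q.2 := by
      refine (isOpen_lt ?_ ?_).mem_nhds hzlt <;> fun_prop
    have hle : ∀ᶠ q : Euc n × ℝ in 𝓝 (x, t), HLu g q.1 q.2 ≤ HLu g x t := by
      filter_upwards [hnear] with q hq
      rw [← hz.2]; exact HLu_le hc hq.le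
    have hA0 : fderiv ℝ (fun q : Euc n × ℝ => HLu g q.1 q.2) (x, t) = 0 :=
      IsLocalMax.fderiv_eq_zero hle
    have hall : HLL g x t ⊆ Metric.ball x t := by
      intro w hw
      rw [Metric.mem_ball, dist_eq_norm]
      by_contra hlt
      obtain ⟨N, hN, hx⟩ := hrep w hw hlt
      refine hlt (hcrit w hw ?_)
      have hw' := hw
      have hfd := hd.hasFDerivAt
      rw [hA0, hx] at hfd
      rw [hx] at hw'
      have := u_fderiv hc hg ht hN hw' hfd (Dg w) 0
      simpa [eq_comm (a := (0:ℝ))] using this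
    have husc := HLL_usc (p := (x, t)) hc hd.continuousAt Metric.isOpen_ball hall
    have hev3 : ∀ᶠ q : Euc n × ℝ in 𝓝 (x, t), 0 < q.2 :=
      (continuous_snd.tendsto (x, t)).eventually (lt_mem_nhds ht)
    have heq : (fun q : Euc n × ℝ => HLu g q.1 q.2) =ᶠ[𝓝 (x, t)] fun _ => HLu g x t := by
      filter_upwards [hle, husc, hev3] with q h1 h2 h3
      refine le_antisymm h1 ?_
      obtain ⟨w, hw⟩ := HLL_nonempty hc q.1 h3.le
      have hwb := h2 hw
      rw [Metric.mem_ball, dist_eq_norm] at hwb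
      rw [← hw.2]
      exact HLu_le hc hwb.le
    exact contDiffAt_const.congr_of_eventuallyEq heq
  · have hne : ∀ z ∈ HLL g x t, Dg z ≠ 0 := fun z hz h0 => hex ⟨z, hz, h0⟩
    obtain ⟨y, hy⟩ := HLL_nonempty hc x ht.le
    have hyD := hne y hy
    have hxy := lagrange hc hg ht hy hyD
    have hform : ∀ z ∈ HLL g x t, ∀ v,
        fderiv ℝ (fun q : Euc n × ℝ => HLu g q.1 q.2) (x, t) (v, 0) = ⟪Dg z, v⟫_ℝ := by
      intro z hz v
      have hx := lagrange hc hg ht hz (hne z hz)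
      have hfd := hd.hasFDerivAt
      have hz' := hz
      rw [hx] at hz'
      have hfd' : HasFDerivAt (fun q : Euc n × ℝ => HLu g q.1 q.2)
          (fderiv ℝ (fun q : Euc n × ℝ => HLu g q.1 q.2) (x, t))
          (z + t • (‖Dg z‖⁻¹ • Dg z), t) := by
        have : z + t • (‖Dg z‖⁻¹ • Dg z) = x := hx.symm
        rw [this]; exact hfd
      have := u_fderiv hc hg ht (N_norm (hne z hz)) hz' hfd' v 0
      simpa using this
    have huniq : HLL g x t = {y} := by
      refine Set.eq_singleton_iff_unique_mem.2 ⟨hy, fun z hz => ?_⟩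
      have hDeq : Dg z = Dg y := ext_inner_right ℝ fun v => by
        rw [← hform z hz v, ← hform y hy v]
      have hx := lagrange hc hg ht hz (hne z hz)
      rw [hxy] at hx
      simp only [charX, hDeq] at hx
      exact (add_right_cancel hx).symm
    have htb : ENNReal.ofReal t < tbar g Dg y := by
      by_contra hle
      have hle := not_lt.1 hle
      refine hT ⟨⟨y, t, hyD, hle.trans_lt ENNReal.ofReal_lt_top, ht, hle, ?_, by rw [hxy]⟩,
        y, huniq⟩
      have hy' := hy
      rw [hxy] at hy'
      exact le_sInf_times hc (N_norm hyD) hy'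
    obtain ⟨_, ⟨s, ⟨hs0, hsL⟩, rfl⟩, hts⟩ := lt_sSup_iff.1 htb
    have hts : t < s := (ENNReal.ofReal_lt_ofReal_iff hs0).1 hts
    obtain ⟨m, rfl⟩ : ∃ m, k = m + 1 := ⟨k - 1, by omega⟩
    have hcont := hd.continuousAt
    rw [hxy] at hcont huniq ⊢
    exact regular_case (by omega) hgk hg ht hts hyD huniq.subset (by rw [hsL]; rfl) hcont
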